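/- Fix p equal to 0 or a prime number. Any two proper pairs of algebraically closed fields of characteristic p are elementarily equivalent: if (M, P(M)) and (M', P(M')) are structures in the language of rings expanded by a unary predicate P, where M and M' are algebraically closed fields of characteristic p and P(M), P(M') are proper algebraically closed subfields of M, M' respectively, then (M, P(M)) and (M', P(M')) satisfy the same sentences. In particular, the theory of proper pairs of algebraically closed fields of a fixed characteristic is complete. -/

import Mathlib

open FirstOrder FirstOrder.Language

/-- The language of rings `{0, 1, +, −, ×}` together with an additional unary predicate
symbol `P`: constants indexed by `Fin 2` (`0` and `1`), a unary function symbol (negation),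
binary function symbols indexed by `Fin 2` (`+` and `×`), and a unary relation symbol `P`. -/
def LRingP : FirstOrder.Language where
  Functions := fun n =>
    match n with
    | 0 => Fin 2
    | 1 => Unit
    | 2 => Fin 2
    | _ => Empty
  Relations := fun n =>
    match n with
    | 1 => Unit
    | _ => Empty

/-- The `L_P`-structure of a pair `(M, P)` where `M` is a field and `P ⊆ M`. -/
def ringPairStr (M : Type*) [Field M] (P : Set M) : LRingP.Structure M where
  funMap {n} :=
    match n with
    | 0 => fun c _ => if (show Fin 2 from c) = 0 then 0 else 1
    | 1 => fun _ x => -x 0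
    | 2 => fun f x => if (show Fin 2 from f) = 0 then x 0 + x 1 else x 0 * x 1
    | _ + 3 => fun f _ => nomatch f
  RelMap {n} :=
    match n with
    | 0 => fun r _ => nomatch r
    | 1 => fun _ x => x 0 ∈ P
    | _ + 2 => fun r _ => nomatch r

/-!
A proper pair `(M, K)` has the theory of a countable pair `(E, F)` in which both `F` over its prime
field and `E` over `F` have infinite transcendence degree; by Steinitz such a pair is determined up
to isomorphism by its characteristic.

To find `(E, F)`, pass to an ultrapower over a nonprincipal ultrafilter on `ℕ`. The ultrapower of
`K` is uncountable, hence of infinite transcendence degree over the prime field. If `t ∉ K`, the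
germs of `n ↦ t ^ n ^ i`, for `i : ℕ`, are algebraically independent over the ultrapower of `K`: for
`n` above the total degree of a polynomial `q`, the Kronecker substitution `X i ↦ X ^ n ^ i` keeps
the monomials of `q` apart, because base `n` digits are unique. The Löwenheim–Skolem theorem then
gives a countable elementary subpair that contains both independent sequences.
-/

universe u v w

namespace FieldPair

section Germ

open Filter

variable {α : Type u} {R : Type v} {S : Type w}

/-- The ring homomorphism between rings of germs induced by a ring homomorphism. -/
def germMap [Semiring R] [Semiring S] (l : Filter α) (f : R →+* S) : Germ l R →+* Germ l S where
  toFun := Germ.map f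
  map_zero' := congrArg Germ.ofFun (funext fun _ => map_zero f)
  map_one' := congrArg Germ.ofFun (funext fun _ => map_one f)
  map_add' x y := Germ.inductionOn₂ x y fun a b =>
    congrArg Germ.ofFun (funext fun n => map_add f (a n) (b n))
  map_mul' x y := Germ.inductionOn₂ x y fun a b =>
    congrArg Germ.ofFun (funext fun n => map_mul f (a n) (b n))

variable {M : Type v} [Field M]

/-- The ultrapower of a subfield, inside the ultrapower of the ambient field. -/
def germSubfield (l : Ultrafilter α) (K : Subfield M) : Subfield (Germ (l : Filter α) M) :=
  (germMap (l : Filter α) K.subtype).fieldRange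

/-- The ultrapower of a subfield as an abstract field of germs. -/
noncomputable def germSubfieldEquiv (l : Ultrafilter α) (K : Subfield M) :
    Germ (l : Filter α) K ≃+* germSubfield l K :=
  (germMap (l : Filter α) K.subtype).rangeRestrictFieldEquiv

theorem coe_mem_germSubfield {l : Ultrafilter α} {K : Subfield M} {f : α → M} :
    (f : Germ (l : Filter α) M) ∈ germSubfield l K ↔ ∀ᶠ n in (l : Filter α), f n ∈ K := by
  refine ⟨?_, fun h => ?_⟩
  · rintro ⟨x, hx⟩
    induction x using Germ.inductionOn with | h g
    filter_upwards [Germ.coe_eq.mp hx] with n hn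
    exact hn ▸ (g n).2
  · classical
    refine ⟨(fun n => if hn : f n ∈ K then ⟨f n, hn⟩ else 0 : α → K), Germ.coe_eq.mpr ?_⟩
    filter_upwards [h] with n hn
    simp only [Function.comp_apply, dif_pos hn, Subfield.subtype_apply]

theorem uncountable_germ [Infinite R] {l : Ultrafilter ℕ} (hl : (l : Filter ℕ) ≤ atTop) :
    Uncountable (Germ (l : Filter ℕ) R) := by
  rw [← not_countable_iff]
  intro h
  have : Nonempty (Germ (l : Filter ℕ) R) := inferInstance
  obtain ⟨g, hg⟩ := exists_surjective_nat (Germ (l : Filter ℕ) R)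
  have exists_rep (k : ℕ) : ∃ f : ℕ → R, (f : Germ (l : Filter ℕ) R) = g k :=
    Quotient.exists_rep (g k)
  choose f hf using exists_rep
  classical
  have diagonal (n : ℕ) : ∃ y, ∀ k ≤ n, f k n ≠ y := by
    obtain ⟨y, hy⟩ := Infinite.exists_notMem_finset ((Finset.range (n + 1)).image (f · n))
    exact ⟨y, fun k hk hkn => hy (Finset.mem_image.mpr ⟨k, Finset.mem_range_succ_iff.mpr hk, hkn⟩)⟩
  choose y hy using diagonal
  obtain ⟨k, hk⟩ := hg y
  obtain ⟨n, hn, hkn⟩ :=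
    ((Germ.coe_eq.mp ((hf k).trans hk)).and (hl (eventually_ge_atTop k))).exists
  exact hy n k hkn hn

theorem algebraicIndependent_germ_of_eventually {σ : Type*} (l : Ultrafilter α) (K : Subfield M)
    (x : σ → α → M) (hx : ∀ D : ℕ, ∀ᶠ n in (l : Filter α), ∀ q : MvPolynomial σ K,
      q.totalDegree ≤ D → MvPolynomial.aeval (x · n) q = 0 → q = 0) :
    AlgebraicIndependent (germSubfield l K) fun i => (x i : Germ (l : Filter α) M) := by
  let φ : (α → K) →+* germSubfield l K :=
    (germSubfieldEquiv l K).toRingHom.comp (Germ.coeRingHom (l : Filter α))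
  have hφ : Function.Surjective φ :=
    (germSubfieldEquiv l K).surjective.comp Quotient.mk_surjective
  rw [algebraicIndependent_iff]
  intro q hq
  -- A relation over germs lifts to functions, where it holds pointwise for almost all `n`.
  obtain ⟨Q, rfl⟩ := MvPolynomial.map_surjective φ hφ q
  let ev (n : α) : (α → K) →+* K := Pi.evalRingHom (fun _ => K) n
  let ι : (α → K) →+* (α → M) := K.subtype.compLeft α
  have aeval_ev (n : α) : MvPolynomial.aeval (x · n) (Q.map (ev n)) = Q.eval₂ ι x n := by
    rw [MvPolynomial.aeval_def, MvPolynomial.eval₂_map]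
    exact (MvPolynomial.eval₂_comp_left (Pi.evalRingHom (fun _ => M) n) ι x Q).symm
  have aeval_germ : ((Q.eval₂ ι x : α → M) : Germ (l : Filter α) M) =
      MvPolynomial.aeval (fun i => (x i : Germ (l : Filter α) M)) (Q.map φ) := by
    have coe_comp : (Germ.coeRingHom (l : Filter α)).comp ι =
        (algebraMap (germSubfield l K) (Germ (l : Filter α) M)).comp φ := RingHom.ext fun _ => rfl
    rw [MvPolynomial.aeval_def, MvPolynomial.eval₂_map, ← coe_comp]
    exact MvPolynomial.eval₂_comp_left (Germ.coeRingHom (l : Filter α)) ι x Q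
  have eval_eq_zero : ∀ᶠ n in (l : Filter α), Q.eval₂ ι x n = 0 :=
    Germ.coe_eq.mp (aeval_germ.trans hq)
  have map_ev_eq_zero : ∀ᶠ n in (l : Filter α), Q.map (ev n) = 0 := by
    filter_upwards [eval_eq_zero, hx Q.totalDegree] with n hn hxn
    exact hxn _ (Finset.sup_mono (MvPolynomial.support_map_subset _ _)) ((aeval_ev n).trans hn)
  ext1 d
  have coeff_germ : ((Q.coeff d : α → K) : Germ (l : Filter α) K) = 0 := by
    refine Germ.coe_eq.mpr ?_
    filter_upwards [map_ev_eq_zero] with n hn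
    exact (MvPolynomial.coeff_map (ev n) Q d).symm.trans (congrArg (MvPolynomial.coeff d) hn)
  rw [MvPolynomial.coeff_map, MvPolynomial.coeff_zero]
  exact (congrArg (germSubfieldEquiv l K) coeff_germ).trans (map_zero _)

end Germ

section Kronecker

open Filter

theorem aeval_X_pow {R σ : Type*} [CommSemiring R] (w : σ → ℕ) (q : MvPolynomial σ R) :
    MvPolynomial.aeval (fun i => (Polynomial.X : Polynomial R) ^ w i) q =
      ∑ d ∈ q.support, Polynomial.monomial (Finsupp.weight w d) (q.coeff d) := by
  rw [MvPolynomial.aeval_def, MvPolynomial.eval₂_eq]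
  refine Finset.sum_congr rfl fun d _ => ?_
  simp only [← pow_mul, Finset.prod_pow_eq_pow_sum, Finsupp.weight_apply, Finsupp.sum, smul_eq_mul,
    mul_comm (w _), ← Polynomial.C_mul_X_pow_eq_monomial]
  rfl

theorem eq_zero_of_aeval_pow_eq_zero_of_injOn {R A σ : Type*} [CommRing R] [CommRing A]
    [Algebra R A] {t : A} (ht : Transcendental R t) {w : σ → ℕ} {q : MvPolynomial σ R}
    (hw : Set.InjOn (Finsupp.weight w) (q.support : Set (σ →₀ ℕ)))
    (hq : MvPolynomial.aeval (fun i => t ^ w i) q = 0) : q = 0 := by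
  classical
  have aeval_X : MvPolynomial.aeval (fun i => (Polynomial.X : Polynomial R) ^ w i) q = 0 := by
    refine transcendental_iff.mp ht _ (.trans ?_ hq)
    rw [MvPolynomial.comp_aeval_apply]
    simp only [map_pow, Polynomial.aeval_X]
  ext1 d
  by_contra hd
  have hd : d ∈ q.support := MvPolynomial.mem_support_iff.mpr hd
  refine MvPolynomial.mem_support_iff.mp hd ?_
  have coeff_weight := congrArg (Polynomial.coeff · (Finsupp.weight w d)) aeval_X
  simp only [aeval_X_pow, Polynomial.finsetSum_coeff, Polynomial.coeff_monomial,
    Polynomial.coeff_zero] at coeff_weight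
  rwa [Finset.sum_eq_single_of_mem d hd fun e he hne => if_neg fun h => hne (hw he hd h),
    if_pos rfl] at coeff_weight

theorem weight_pow_injOn (B : ℕ) :
    Set.InjOn (Finsupp.weight fun i : ℕ => B ^ i) {d : ℕ →₀ ℕ | ∀ i, d i < B} := by
  intro d hd e he h
  -- `finFunctionFinEquiv` reads a tuple as the base `B` digits of a number.
  have weight_eq (f : ℕ →₀ ℕ) (hf : ∀ i, f i < B) (N : ℕ) (hN : f.support ⊆ Finset.range N) :
      Finsupp.weight (fun i => B ^ i) f =
        finFunctionFinEquiv fun i : Fin N => (⟨f i, hf i⟩ : Fin B) := by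
    rw [finFunctionFinEquiv_apply, Finset.sum_fin_eq_sum_range, Finsupp.weight_apply,
      Finsupp.sum_of_support_subset f hN _ fun i _ => zero_smul ℕ (B ^ i)]
    exact Finset.sum_congr rfl fun i hi => by rw [dif_pos (Finset.mem_range.mp hi), smul_eq_mul]
  obtain ⟨N, hN⟩ := (d.support ∪ e.support).exists_nat_subset_range
  have hdN := Finset.subset_union_left.trans hN
  have heN := Finset.subset_union_right.trans hN
  rw [weight_eq d hd N hdN, weight_eq e he N heN] at h
  have digits_eq := finFunctionFinEquiv.injective (Fin.ext h)
  ext i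
  by_cases hi : i < N
  · exact congrArg Fin.val (congrFun digits_eq ⟨i, hi⟩)
  · rw [Finsupp.notMem_support_iff.mp fun h => hi (Finset.mem_range.mp (hdN h)),
      Finsupp.notMem_support_iff.mp fun h => hi (Finset.mem_range.mp (heN h))]

theorem kronecker_substitution {R A : Type*} [CommRing R] [CommRing A] [Algebra R A] {t : A}
    (ht : Transcendental R t) {B : ℕ} {q : MvPolynomial ℕ R} (hB : q.totalDegree < B)
    (hq : MvPolynomial.aeval (fun i => t ^ B ^ i) q = 0) : q = 0 :=
  eq_zero_of_aeval_pow_eq_zero_of_injOn ht ((weight_pow_injOn B).mono fun _ hd i =>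
    (MvPolynomial.monomial_le_degreeOf i hd).trans_lt
      ((MvPolynomial.degreeOf_le_totalDegree q i).trans_lt hB)) hq

theorem algebraicIndependent_germ_pow_pow {M : Type u} [Field M] {l : Ultrafilter ℕ}
    (hl : (l : Filter ℕ) ≤ atTop) {K : Subfield M} {t : M} (ht : Transcendental K t) :
    AlgebraicIndependent (germSubfield l K)
      fun i : ℕ => ((fun n => t ^ n ^ i : ℕ → M) : Germ (l : Filter ℕ) M) := by
  refine algebraicIndependent_germ_of_eventually l K _ fun D => ?_
  filter_upwards [hl (eventually_gt_atTop D)] with n hn q hqD hq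
  exact kronecker_substitution ht (hqD.trans_lt hn) hq

end Kronecker

section TranscendenceBasis

theorem exists_isTranscendenceBasis_nat {R : Type u} {E : Type v} [CommRing R] [CommRing E]
    [IsDomain E] [Algebra R E] [Countable E] {a : ℕ → E} (ha : AlgebraicIndependent R a) :
    ∃ b : ℕ → E, IsTranscendenceBasis R b := by
  have : Nontrivial R := RingHom.domain_nontrivial (algebraMap R E)
  obtain ⟨B, hB, hbasis⟩ := exists_isTranscendenceBasis_superset ha.coe_range
  have : Infinite B := ((Set.infinite_range_of_injective ha.injective).mono hB).to_subtype
  obtain ⟨e⟩ := nonempty_equiv_of_countable (α := ℕ) (β := B)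
  exact ⟨_, hbasis.comp_equiv e⟩

theorem nonempty_algEquiv_of_algebraicIndependent_nat {R : Type u} {E : Type v} {E' : Type w}
    [CommRing R] [Field E] [Field E'] [Algebra R E] [Algebra R E'] [IsAlgClosed E] [IsAlgClosed E']
    [Countable E] [Countable E'] {a : ℕ → E} (ha : AlgebraicIndependent R a)
    {a' : ℕ → E'} (ha' : AlgebraicIndependent R a') : Nonempty (E ≃ₐ[R] E') := by
  obtain ⟨b, hb⟩ := exists_isTranscendenceBasis_nat ha
  obtain ⟨b', hb'⟩ := exists_isTranscendenceBasis_nat ha'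
  let e : Algebra.adjoin R (Set.range b) ≃ₐ[R] Algebra.adjoin R (Set.range b') :=
    hb.1.aevalEquiv.symm.trans hb'.1.aevalEquiv
  have := IsAlgClosed.isAlgClosure_of_transcendence_basis b hb
  have := IsAlgClosed.isAlgClosure_of_transcendence_basis b' hb'
  refine ⟨.ofRingEquiv (f := IsAlgClosure.equivOfEquiv E E' e.toRingEquiv) fun r => ?_⟩
  exact (IsAlgClosure.equivOfEquiv_algebraMap E E' e.toRingEquiv (algebraMap R _ r)).trans
    (congrArg Subtype.val (e.commutes r))

theorem exists_algebraicIndependent_nat (R : Type u) (E : Type v) [CommRing R] [Countable R]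
    [CommRing E] [IsDomain E] [Algebra R E] [FaithfulSMul R E] [Uncountable E] :
    ∃ a : ℕ → E, AlgebraicIndependent R a := by
  obtain ⟨B, hB⟩ := exists_isTranscendenceBasis R E
  have : Infinite B := by
    rw [← not_finite_iff_infinite]
    intro _
    have : Nontrivial R := RingHom.domain_nontrivial (algebraMap R E)
    have : Countable (MvPolynomial B R) :=
      Cardinal.mk_le_aleph0_iff.mp (MvPolynomial.cardinalMk_le_max_lift.trans (by simp))
    have : Countable (Algebra.adjoin R (Set.range ((↑) : B → E))) :=
      hB.1.aevalEquiv.symm.injective.countable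
    exact Set.not_countable_univ <| (Algebraic.countable (Algebra.adjoin R _) E).mono fun x _ =>
      hB.isAlgebraic.isAlgebraic x
  exact ⟨_, hB.1.comp _ (Infinite.natEmbedding B).injective⟩

end TranscendenceBasis

section ElementaryEquivalence

/-- Elementary equivalence of the pairs `(M, P)` and `(M', P')`. Both structures are given
explicitly because `ringPairStr` is not an instance. -/
abbrev PairElementarilyEquivalent {M : Type u} {M' : Type v} [Field M] [Field M']
    (P : Set M) (P' : Set M') : Prop :=
  @ElementarilyEquivalent LRingP M M' (ringPairStr M P) (ringPairStr M' P')

protected theorem PairElementarilyEquivalent.symm {M : Type u} {M' : Type v} [Field M] [Field M']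
    {P : Set M} {P' : Set M'} (h : PairElementarilyEquivalent P P') :
    PairElementarilyEquivalent P' P :=
  Eq.symm h

protected theorem PairElementarilyEquivalent.trans {M : Type u} {M' : Type v} {M'' : Type w}
    [Field M] [Field M'] [Field M''] {P : Set M} {P' : Set M'} {P'' : Set M''}
    (h : PairElementarilyEquivalent P P') (h' : PairElementarilyEquivalent P' P'') :
    PairElementarilyEquivalent P P'' :=
  Eq.trans h h'

theorem elementarilyEquivalent_of_equiv {A : Type u} {E : Type v} [LRingP.Structure A] [Field E]
    {P : Set E} (e : A ≃ E)
    (map_zero : ∀ x, e (Structure.funMap (L := LRingP) (n := 0) (0 : Fin 2) x) = 0)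
    (map_one : ∀ x, e (Structure.funMap (L := LRingP) (n := 0) (1 : Fin 2) x) = 1)
    (map_neg : ∀ x, e (Structure.funMap (L := LRingP) (n := 1) () x) = -e (x 0))
    (map_add : ∀ x, e (Structure.funMap (L := LRingP) (n := 2) (0 : Fin 2) x) = e (x 0) + e (x 1))
    (map_mul : ∀ x, e (Structure.funMap (L := LRingP) (n := 2) (1 : Fin 2) x) = e (x 0) * e (x 1))
    (mem_iff : ∀ x : Fin 1 → A, e (x 0) ∈ P ↔ Structure.RelMap (L := LRingP) (n := 1) () x) :
    @ElementarilyEquivalent LRingP A E _ (ringPairStr E P) := by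
  let _ := ringPairStr E P
  let f : A ≃[LRingP] E :=
    { toEquiv := e
      map_fun' := fun {n} f x =>
        match n, f with
        | 0, (0 : Fin 2) => map_zero x
        | 0, (1 : Fin 2) => map_one x
        | 1, _ => map_neg x
        | 2, (0 : Fin 2) => map_add x
        | 2, (1 : Fin 2) => map_mul x
      map_rel' := fun {n} r x =>
        match n, r with
        | 1, _ => mem_iff x }
  exact StrongHomClass.elementarilyEquivalent f

theorem PairElementarilyEquivalent.of_ringEquiv {E : Type u} {E' : Type v} [Field E] [Field E']
    {P : Set E} {P' : Set E'} (e : E ≃+* E') (h : ∀ x, e x ∈ P' ↔ x ∈ P) :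
    PairElementarilyEquivalent P P' :=
  let _ := ringPairStr E P
  elementarilyEquivalent_of_equiv e.toEquiv (fun _ => map_zero e) (fun _ => map_one e)
    (fun x => map_neg e (x 0)) (fun x => map_add e (x 0) (x 1)) (fun x => map_mul e (x 0) (x 1))
    (fun x => h (x 0))

theorem card_LRingP_le_aleph0 : LRingP.card ≤ Cardinal.aleph0 := by
  have countable_functions : ∀ n, Countable (LRingP.Functions n)
    | 0 => inferInstanceAs (Countable (Fin 2))
    | 1 => inferInstanceAs (Countable Unit)
    | 2 => inferInstanceAs (Countable (Fin 2))
    | _ + 3 => inferInstanceAs (Countable Empty)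
  have countable_relations : ∀ n, Countable (LRingP.Relations n)
    | 0 => inferInstanceAs (Countable Empty)
    | 1 => inferInstanceAs (Countable Unit)
    | _ + 2 => inferInstanceAs (Countable Empty)
  exact Cardinal.mk_le_aleph0_iff.mpr
    (inferInstanceAs (Countable ((Σ n, LRingP.Functions n) ⊕ Σ n, LRingP.Relations n)))

/-- The inclusion of the language of rings into `LRingP`. -/
def ringToLRingP : Language.ring →ᴸ LRingP where
  onFunction
    | _, .zero => (0 : Fin 2)
    | _, .one => (1 : Fin 2)
    | _, .neg => ()
    | _, .add => (0 : Fin 2)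
    | _, .mul => (1 : Fin 2)
  onRelation _ r := r.elim

/-- The ring reduct of a pair. -/
abbrev compatibleRing (E : Type u) [Field E] (P : Set E) : Ring.CompatibleRing E :=
  letI := ringPairStr E P
  { ringToLRingP.reduct E with
    funMap_add := fun _ => rfl
    funMap_mul := fun _ => rfl
    funMap_neg := fun _ => rfl
    funMap_zero := fun _ => rfl
    funMap_one := fun _ => rfl }

theorem reduct_models_ACF {A : Type u} [LRingP.Structure A] {E : Type v} [Field E] [IsAlgClosed E]
    (p : ℕ) [CharP E p] {P : Set E} (h : @ElementarilyEquivalent LRingP A E _ (ringPairStr E P)) :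
    @Theory.Model _ A (ringToLRingP.reduct A) (Theory.ACF p) := by
  let _ := ringPairStr E P
  let _ := ringToLRingP.reduct A
  let _ := compatibleRing E P
  have : E ⊨ ringToLRingP.onTheory (Theory.ACF p) :=
    (ringToLRingP.onTheory_model _).mpr inferInstance
  exact (ringToLRingP.onTheory_model _).mp (h.theory_model_iff.mpr this)

theorem PairElementarilyEquivalent.isAlgClosed {E : Type u} {E' : Type v} [Field E] [Field E']
    [IsAlgClosed E] {P : Set E} {P' : Set E'} (h : PairElementarilyEquivalent P P') :
    IsAlgClosed E' := by
  let _ := ringPairStr E' P'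
  have := reduct_models_ACF (ringChar E) h.symm
  let _ := compatibleRing E' P'
  exact Field.isAlgClosed_of_model_ACF (ringChar E) E'

theorem exists_ringHom_of_elementaryEmbedding {A : Type u} [LRingP.Structure A] {E : Type v}
    [Field E] [IsAlgClosed E] (P : Set E) :
    letI := ringPairStr E P
    ∀ f : A ↪ₑ[LRingP] E, ∃ (_ : Field A) (g : A →+* E), ⇑g = f ∧ IsAlgClosed A ∧
      PairElementarilyEquivalent (g ⁻¹' P) P := by
  let _ := ringPairStr E P
  intro f
  let _ := ringToLRingP.reduct A
  have := reduct_models_ACF (ringChar E) f.elementarilyEquivalent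
  let _ : Field A := Field.fieldOfModelACF (ringChar E) A
  have := Field.modelField_of_modelACF (ringChar E) A
  let _ := Field.compatibleRingOfModelField A
  let g : A →+* E :=
    { toFun := f
      map_zero' := f.map_fun (n := 0) (0 : Fin 2) _
      map_one' := f.map_fun (n := 0) (1 : Fin 2) _
      map_add' := fun x y => f.map_fun (n := 2) (0 : Fin 2) ![x, y]
      map_mul' := fun x y => f.map_fun (n := 2) (1 : Fin 2) ![x, y] }
  refine ⟨inferInstance, g, rfl, Field.isAlgClosed_of_model_ACF (ringChar E) A, ?_⟩
  have hA := elementarilyEquivalent_of_equiv (P := g ⁻¹' P) (Equiv.refl A)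
    Ring.CompatibleRing.funMap_zero Ring.CompatibleRing.funMap_one Ring.CompatibleRing.funMap_neg
    Ring.CompatibleRing.funMap_add Ring.CompatibleRing.funMap_mul
    (fun x => f.map_rel (n := 1) () x)
  exact Eq.trans (Eq.symm hA) f.elementarilyEquivalent

theorem exists_countable_elementary_subfield {E : Type u} [Field E] [IsAlgClosed E] (P : Set E)
    {s : Set E} (hs : s.Countable) :
    ∃ (E₀ : Type u) (_ : Field E₀) (g : E₀ →+* E), Countable E₀ ∧ s ⊆ Set.range g ∧
      IsAlgClosed E₀ ∧ PairElementarilyEquivalent (g ⁻¹' P) P := by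
  let _ := ringPairStr E P
  have : Infinite E := IsAlgClosed.instInfinite
  obtain ⟨S, hsS, hcard⟩ := exists_elementarySubstructure_card_eq LRingP s Cardinal.aleph0.{0}
    le_rfl (by simpa using hs) (by simpa using card_LRingP_le_aleph0) (by simp)
  obtain ⟨_, g, hg, hS, hequiv⟩ := exists_ringHom_of_elementaryEmbedding P S.subtype
  refine ⟨S, _, g, ?_, ?_, hS, hequiv⟩
  · exact Cardinal.mk_le_aleph0_iff.mp (by simpa using hcard.le)
  · intro x hx
    exact ⟨⟨x, hsS hx⟩, congrFun hg _⟩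

end ElementaryEquivalence

section Ultrapower

open Filter

theorem PairElementarilyEquivalent.germ {α : Type v} {M : Type u} [Field M] (l : Ultrafilter α)
    {P : Set M} {Q : Set (Germ (l : Filter α) M)}
    (hQ : ∀ f : α → M, (f : Germ (l : Filter α) M) ∈ Q ↔ ∀ᶠ n in (l : Filter α), f n ∈ P) :
    PairElementarilyEquivalent P Q := by
  let _ := ringPairStr M P
  have hpow : (l : Filter α).Product (fun _ => M) ≅[LRingP] M := by
    simp only [elementarilyEquivalent_iff, Ultraproduct.sentence_realize, eventually_const,
      implies_true]
  have lift {n} (x : Fin n → (l : Filter α).Product fun _ => M) :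
      ∃ a : Fin n → α → M, (fun i => Quotient.mk _ (a i)) = x :=
    ⟨fun i => (x i).out, funext fun i => (x i).out_eq⟩
  have hgerm : @ElementarilyEquivalent LRingP ((l : Filter α).Product fun _ => M)
      (Germ (l : Filter α) M) _ (ringPairStr _ Q) := by
    refine elementarilyEquivalent_of_equiv (Quotient.congrRight fun _ _ => Iff.rfl)
      (fun x => ?_) (fun x => ?_) (fun x => ?_) (fun x => ?_) (fun x => ?_) (fun x => ?_) <;>
      obtain ⟨a, rfl⟩ := lift x
    iterate 5 exact congrArg _ (Ultraproduct.funMap_cast (u := l) _ a)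
    exact (hQ (a 0)).trans (relMap_quotient_mk' (L := LRingP) (productSetoid l _) _ a).symm
  exact Eq.trans (Eq.symm hpow) hgerm

end Ultrapower

section RichPair

open Filter

theorem mem_of_isAlgebraic {E : Type u} [Field E] {F : Subfield E} [IsAlgClosed F] {x : E}
    (hx : IsAlgebraic F x) : x ∈ F := by
  obtain ⟨y, hy⟩ := minpoly.mem_range_of_degree_eq_one F x
    (IsAlgClosed.degree_eq_one_of_irreducible F (minpoly.irreducible hx.isIntegral))
  exact hy ▸ y.2

theorem isAlgClosed_comap {E₀ : Type u} {E : Type v} [Field E₀] [Field E] [IsAlgClosed E₀]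
    (f : E₀ →+* E) (F : Subfield E) [IsAlgClosed F] : IsAlgClosed (F.comap f) := by
  rw [← IsAlgClosed.algebraicClosure_eq_bot_iff (F.comap f) E₀, eq_bot_iff]
  intro x hx
  have hfx : IsAlgebraic F (f x) :=
    IsAlgebraic.ringHom_of_comp_eq (f.restrict (F.comap f) F fun _ h => h) f
      (mem_algebraicClosure_iff.mp hx) (RingHom.injective _) rfl
  have hx' : f x ∈ F := mem_of_isAlgebraic hfx
  exact ⟨⟨x, hx'⟩, rfl⟩

/-- An algebraically closed field `E` with an algebraically closed subfield `F` such that both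
`F` over its prime field `ZMod p` and `E` over `F` have infinite transcendence degree, as witnessed
by independent sequences. The sequence over `ZMod p` also forces the characteristic to be `p`. -/
structure IsRichPair (p : ℕ) {E : Type u} [Field E] (F : Subfield E) : Prop where
  isAlgClosed : IsAlgClosed E
  isAlgClosed_subfield : IsAlgClosed F
  exists_independent_subfield :
    ∃ (_ : Algebra (ZMod p) F) (a : ℕ → F), AlgebraicIndependent (ZMod p) a
  exists_independent : ∃ b : ℕ → E, AlgebraicIndependent F b

theorem IsRichPair.exists_countable {p : ℕ} {E : Type u} [Field E] {F : Subfield E}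
    (hF : IsRichPair p F) : ∃ (E₀ : Type u) (_ : Field E₀) (F₀ : Subfield E₀), Countable E₀ ∧
      IsRichPair p F₀ ∧ PairElementarilyEquivalent (F₀ : Set E₀) (F : Set E) := by
  obtain ⟨_, _, ⟨_, a, ha⟩, ⟨b, hb⟩⟩ := hF
  obtain ⟨E₀, _, g, hcount, hrange, _, hequiv⟩ := exists_countable_elementary_subfield (F : Set E)
    ((Set.countable_range fun i => (a i : E)).union (Set.countable_range b))
  choose a₀ ha₀ using fun i => hrange (.inl ⟨i, rfl⟩)
  choose b₀ hb₀ using fun i => hrange (.inr ⟨i, rfl⟩)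
  let g' : F.comap g →+* F := g.restrict (F.comap g) F fun _ h => h
  have : CharP F p := charP_of_injective_algebraMap ha.algebraMap_injective p
  have : CharP (F.comap g) p := (g'.charP_iff_charP p).mpr ‹_›
  let _ : Algebra (ZMod p) (F.comap g) := ZMod.algebra (F.comap g) p
  refine ⟨E₀, _, F.comap g, hcount, ⟨‹_›, isAlgClosed_comap g F, ⟨‹_›, fun i => ⟨a₀ i, ?_⟩, ?_⟩,
    ⟨b₀, ?_⟩⟩, hequiv⟩
  · exact Subfield.mem_comap.mpr (Set.mem_of_eq_of_mem (ha₀ i) (a i).2)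
  · refine .of_ringHom_of_comp_eq (RingHom.id (ZMod p)) g' ?_ Function.injective_id
      (Subsingleton.elim _ _)
    convert ha using 1
    exact funext fun i => Subtype.ext (ha₀ i)
  · refine .of_ringHom_of_comp_eq g' g ?_ g'.injective rfl
    convert hb using 1
    exact funext hb₀

theorem IsRichPair.exists_ringEquiv {p : ℕ} {E : Type u} {E' : Type v} [Field E] [Field E']
    [Countable E] [Countable E'] {F : Subfield E} {F' : Subfield E'} (hF : IsRichPair p F)
    (hF' : IsRichPair p F') : ∃ f : E ≃+* E', ∀ x, f x ∈ F' ↔ x ∈ F := by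
  obtain ⟨_, _, ⟨_, a, ha⟩, ⟨b, hb⟩⟩ := hF
  obtain ⟨_, _, ⟨_, a', ha'⟩, ⟨b', hb'⟩⟩ := hF'
  obtain ⟨g⟩ := nonempty_algEquiv_of_algebraicIndependent_nat ha ha'
  let _ : Algebra F E' := ((algebraMap F' E').comp (g : F →+* F')).toAlgebra
  obtain ⟨f⟩ := nonempty_algEquiv_of_algebraicIndependent_nat hb
    (hb'.of_ringHom_of_comp_eq (g : F →+* F') (RingHom.id E') g.injective rfl)
  have f_coe (y : F) : f y = g y := f.commutes y
  refine ⟨f, fun x => ⟨fun hx => ?_, fun hx => ?_⟩⟩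
  · obtain ⟨y, hy⟩ := g.surjective ⟨f x, hx⟩
    have : f y = f x := (f_coe y).trans (congrArg Subtype.val hy)
    exact f.injective this ▸ y.2
  · exact (f_coe ⟨x, hx⟩).symm ▸ (g ⟨x, hx⟩).2

instance countable_zmod (p : ℕ) : Countable (ZMod p) :=
  match p with
  | 0 => inferInstanceAs (Countable ℤ)
  | n + 1 => inferInstanceAs (Countable (Fin (n + 1)))

theorem isRichPair_germSubfield (p : ℕ) {M : Type u} [Field M] [IsAlgClosed M] [CharP M p]
    {K : Subfield M} [IsAlgClosed K] (hK : (K : Set M) ≠ Set.univ) {l : Ultrafilter ℕ}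
    (hl : (l : Filter ℕ) ≤ atTop) : IsRichPair p (germSubfield l K) := by
  obtain ⟨t, ht⟩ := (Set.ne_univ_iff_exists_notMem _).mp hK
  have isAlgClosed_germ (L : Type u) [Field L] [IsAlgClosed L] :
      IsAlgClosed (Germ (l : Filter ℕ) L) :=
    (PairElementarilyEquivalent.germ l (P := Set.univ) (Q := Set.univ) (by simp)).isAlgClosed
  have := isAlgClosed_germ M
  have := isAlgClosed_germ K
  have : IsAlgClosed (germSubfield l K) := .of_ringEquiv _ _ (germSubfieldEquiv l K)
  have : Uncountable (germSubfield l K) :=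
    have := uncountable_germ (R := K) hl
    (germSubfieldEquiv l K).symm.surjective.uncountable
  have : CharP (Germ (l : Filter ℕ) M) p :=
    (((Germ.coeRingHom (l : Filter ℕ)).comp (Pi.constRingHom ℕ M)).charP_iff_charP p).mp ‹_›
  have : CharP (germSubfield l K) p := ((germSubfield l K).subtype.charP_iff_charP p).mpr ‹_›
  let _ : Algebra (ZMod p) (germSubfield l K) := ZMod.algebra _ p
  have : FaithfulSMul (ZMod p) (germSubfield l K) :=
    (faithfulSMul_iff_algebraMap_injective _ _).mpr (ZMod.castHom_injective _)
  exact ⟨‹_›, ‹_›, ⟨‹_›, exists_algebraicIndependent_nat _ _⟩,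
    ⟨_, algebraicIndependent_germ_pow_pow hl (mt mem_of_isAlgebraic ht)⟩⟩

theorem exists_countable_isRichPair (p : ℕ) {M : Type u} [Field M] [IsAlgClosed M] [CharP M p]
    {K : Subfield M} [IsAlgClosed K] (hK : (K : Set M) ≠ Set.univ) :
    ∃ (E : Type u) (_ : Field E) (F : Subfield E), Countable E ∧ IsRichPair p F ∧
      PairElementarilyEquivalent (K : Set M) (F : Set E) := by
  obtain ⟨E, _, F, hE, hF, hequiv⟩ :=
    (isRichPair_germSubfield p hK Nat.hyperfilter_le_atTop).exists_countable
  have hgerm : PairElementarilyEquivalent (K : Set M) (germSubfield (hyperfilter ℕ) K) :=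
    .germ (hyperfilter ℕ) fun _ => coe_mem_germSubfield
  exact ⟨E, _, F, hE, hF, hgerm.trans hequiv.symm⟩

end RichPair

end FieldPair

theorem proper_pairs_of_algebraically_closed_fields_elementarilyEquivalent_general
    (p : ℕ) (M : Type u) (M' : Type v) [Field M] [Field M'] [IsAlgClosed M] [IsAlgClosed M']
    [CharP M p] [CharP M' p] (K : Subfield M) (K' : Subfield M') [IsAlgClosed K] [IsAlgClosed K']
    (hKproper : (K : Set M) ≠ Set.univ) (hK'proper : (K' : Set M') ≠ Set.univ) :
    @FirstOrder.Language.ElementarilyEquivalent LRingP M M'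
      (ringPairStr M (K : Set M)) (ringPairStr M' (K' : Set M')) := by
  obtain ⟨E, _, F, _, hF, hKF⟩ := FieldPair.exists_countable_isRichPair p hKproper
  obtain ⟨E', _, F', _, hF', hKF'⟩ := FieldPair.exists_countable_isRichPair p hK'proper
  obtain ⟨f, hf⟩ := hF.exists_ringEquiv hF'
  have hFF' : FieldPair.PairElementarilyEquivalent (F : Set E) (F' : Set E') := .of_ringEquiv f hf
  exact (hKF.trans hFF').trans hKF'.symm

/-- Fix `p` equal to `0` or a prime.  Any two proper pairs of algebraically
closed fields of characteristic `p` are elementarily equivalent in the language of rings with a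
predicate for the subfield; in particular the theory of proper pairs of algebraically closed
fields of a fixed characteristic is complete. -/
theorem proper_pairs_of_algebraically_closed_fields_elementarilyEquivalent
    (p : ℕ) (hp : p = 0 ∨ p.Prime)
    (M M' : Type) [Field M] [Field M'] [IsAlgClosed M] [IsAlgClosed M']
    [CharP M p] [CharP M' p]
    (K : Subfield M) (K' : Subfield M')
    (hK : IsAlgClosed K) (hK' : IsAlgClosed K')
    (hKproper : (K : Set M) ≠ Set.univ) (hK'proper : (K' : Set M') ≠ Set.univ) :
    @FirstOrder.Language.ElementarilyEquivalent LRingP M M'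
      (ringPairStr M (K : Set M)) (ringPairStr M' (K' : Set M')) :=
  proper_pairs_of_algebraically_closed_fields_elementarilyEquivalent_general p M M' K K' hKproper
    hK'proper
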